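/- Let 𝔽 be a finite field with h elements. For any N-tuple (i₁,…,i_N) with i_r ≥ 0 and i₁+⋯+i_N = 1, the set Bad_{𝔽((X⁻¹))}(i₁,…,i_N) ⊆ 𝔽((X⁻¹))^N has Hausdorff dimension N. -/

import Mathlib

open scoped ENNReal Classical

/-- The field `𝔽((X⁻¹))` of formal power series in `X⁻¹` over `𝔽` is modelled as the field
of formal Laurent series `LaurentSeries 𝔽 = HahnSeries ℤ 𝔽` in the variable `T = X⁻¹`; an
element `f = Σ_{i = -n}^∞ a_{-i} X^{-i} = Σ_{i ≥ -n} a_{-i} T^i` with `a_n ≠ 0` has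
`T`-order `-n` and absolute value `‖f‖ = hⁿ = h^{-ord f}`, where `h = #𝔽`. -/
noncomputable def lsAbs (F : Type*) [Field F] [Fintype F] (f : LaurentSeries F) : ℝ :=
  if f = 0 then 0 else (Fintype.card F : ℝ) ^ (-f.order)

lemma lsAbs_nonneg (F : Type*) [Field F] [Fintype F] (f : LaurentSeries F) :
    0 ≤ lsAbs F f := by
  unfold lsAbs
  split
  · exact le_rfl
  · exact (zpow_pos (by exact_mod_cast Fintype.card_pos) _).le

lemma lsAbs_neg (F : Type*) [Field F] [Fintype F] (f : LaurentSeries F) :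
    lsAbs F (-f) = lsAbs F f := by
  unfold lsAbs
  rw [neg_eq_zero, HahnSeries.order_neg]

lemma lsAbs_add_le (F : Type*) [Field F] [Fintype F] (f g : LaurentSeries F) :
    lsAbs F (f + g) ≤ max (lsAbs F f) (lsAbs F g) := by
  by_cases hfg : f + g = 0
  · rw [hfg]
    rw [show lsAbs F 0 = 0 by rw [lsAbs, if_pos rfl]]
    exact le_max_of_le_left (lsAbs_nonneg F f)
  by_cases hf : f = 0
  · rw [hf, zero_add]; exact le_max_right _ _
  by_cases hg : g = 0
  · rw [hg, add_zero]; exact le_max_left _ _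
  have hcard : (1 : ℝ) ≤ (Fintype.card F : ℝ) := by exact_mod_cast Fintype.card_pos
  have horder := HahnSeries.min_order_le_order_add hfg
  rw [lsAbs, if_neg hfg, lsAbs, if_neg hf, lsAbs, if_neg hg]
  rcases le_total f.order g.order with h | h
  · have h1 : f.order ≤ (f + g).order := le_trans (by simp [min_eq_left h]) horder
    exact le_max_of_le_left (zpow_le_zpow_right₀ hcard (neg_le_neg h1))
  · have h1 : g.order ≤ (f + g).order := le_trans (by simp [min_eq_right h]) horder
    exact le_max_of_le_right (zpow_le_zpow_right₀ hcard (neg_le_neg h1))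

lemma lsAbs_eq_zero (F : Type*) [Field F] [Fintype F] {f : LaurentSeries F}
    (h : lsAbs F f = 0) : f = 0 := by
  by_contra hne
  rw [lsAbs, if_neg hne] at h
  exact absurd h (ne_of_gt (zpow_pos (by exact_mod_cast Fintype.card_pos) _))

/-- The metric on `𝔽((X⁻¹))` induced by the absolute value `‖·‖`. -/
noncomputable def lsMetricSpace (F : Type*) [Field F] [Fintype F] :
    MetricSpace (LaurentSeries F) where
  dist f g := lsAbs F (f - g)
  dist_self f := by
    show lsAbs F (f - f) = 0
    rw [sub_self, lsAbs, if_pos rfl]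
  dist_comm f g := by
    show lsAbs F (f - g) = lsAbs F (g - f)
    rw [← lsAbs_neg F (f - g), neg_sub]
  dist_triangle f g k := by
    show lsAbs F (f - k) ≤ lsAbs F (f - g) + lsAbs F (g - k)
    have h1 : lsAbs F (f - k) = lsAbs F ((f - g) + (g - k)) := by
      rw [sub_add_sub_cancel]
    rw [h1]
    exact le_trans (lsAbs_add_le F _ _)
      (max_le_add_of_nonneg (lsAbs_nonneg F _) (lsAbs_nonneg F _))
  eq_of_dist_eq_zero := by
    intro f g hd
    have : f - g = 0 := lsAbs_eq_zero F hd
    exact sub_eq_zero.mp this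

/-- The embedding of the polynomial ring `𝔽[X]` into `𝔽((X⁻¹))`: the variable `X` is sent to
`T⁻¹ = HahnSeries.single (-1) 1`, the inverse of the variable `T = X⁻¹` of the Laurent
series field. -/
noncomputable def polyToLS (F : Type*) [Field F] [Fintype F] :
    Polynomial F →+* LaurentSeries F :=
  (Polynomial.aeval (HahnSeries.single (-1 : ℤ) (1 : F) : LaurentSeries F)).toRingHom

/-!
For `m > 0`, a point is badly approximable if, for all `k`, no rational point with denominator of
degree less than `m k` lies in a suitably small box around it, of side about `h^(-(1 + i_r) m k)`
in the `r`-th coordinate. Expand the points of the unit ball in digits. By the simplex lemma, the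
rational points that matter for one box of the `k`-th level all lie on a single hyperplane, and
changing one further digit, in the direction in which this hyperplane is steepest, moves a point
out of its neighbourhood. Hence at least half of the extensions to the next level, and so at least
one in `h`, avoid these rational points. Spreading mass evenly over the surviving branches gives a ball of radius `h^(-m k)` mass at
most `h^(k - N m k)`, so the mass distribution principle bounds the dimension below by `N - 1/m`.
-/

section OrderGE

/-- The closed ball of radius `h⁻ⁿ` around `0` in `R((X⁻¹))`, that is, the series of order at
least `n`, as an additive subgroup. -/
def orderGE (R : Type*) [AddGroup R] (n : ℤ) : AddSubgroup (LaurentSeries R) where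
  carrier := {f | ∀ j < n, f.coeff j = 0}
  zero_mem' := fun _ _ => rfl
  add_mem' hf hg j hj := by rw [HahnSeries.coeff_add, hf j hj, hg j hj, add_zero]
  neg_mem' hf j hj := by rw [HahnSeries.coeff_neg, hf j hj, neg_zero]

variable {R : Type*} {m n : ℤ}

lemma mem_orderGE [AddGroup R] {f : LaurentSeries R} :
    f ∈ orderGE R n ↔ ∀ j < n, f.coeff j = 0 := Iff.rfl

lemma mem_orderGE_iff_le_orderTop [AddGroup R] {f : LaurentSeries R} :
    f ∈ orderGE R n ↔ (n : WithTop ℤ) ≤ f.orderTop := by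
  simp only [mem_orderGE, HahnSeries.le_orderTop_iff_forall, WithTop.coe_lt_coe]

lemma mem_orderGE_iff_le_order [AddGroup R] {f : LaurentSeries R} (hf : f ≠ 0) :
    f ∈ orderGE R n ↔ n ≤ f.order := by
  rw [mem_orderGE_iff_le_orderTop, ← HahnSeries.order_eq_orderTop_of_ne_zero hf,
    WithTop.coe_le_coe]

lemma orderGE_antitone [AddGroup R] : Antitone (orderGE R) :=
  fun _ _ hmn _ hf j hj => hf j (hj.trans_le hmn)

lemma mul_mem_orderGE [Ring R] {f g : LaurentSeries R} (hf : f ∈ orderGE R m)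
    (hg : g ∈ orderGE R n) : f * g ∈ orderGE R (m + n) := by
  rw [mem_orderGE_iff_le_orderTop] at *
  rw [WithTop.coe_add]
  exact (add_le_add hf hg).trans HahnSeries.orderTop_add_le_mul

lemma mem_orderGE_of_mul_mem [Ring R] [IsDomain R] {f g : LaurentSeries R} (hf : f ≠ 0)
    (h : f * g ∈ orderGE R n) : g ∈ orderGE R (n - f.order) := by
  rcases eq_or_ne g 0 with rfl | hg
  · exact zero_mem _
  · rw [mem_orderGE_iff_le_order (mul_ne_zero hf hg), HahnSeries.order_mul hf hg] at h
    rw [mem_orderGE_iff_le_order hg]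
    linarith

lemma exists_mem_orderGE_neg [AddGroup R] (f : LaurentSeries R) :
    ∃ l : ℕ, f ∈ orderGE R (-l) := by
  rcases eq_or_ne f 0 with rfl | hf
  · exact ⟨0, zero_mem _⟩
  · exact ⟨(-f.order).toNat, by rw [mem_orderGE_iff_le_order hf]; omega⟩

lemma single_mem_orderGE [AddGroup R] (n : ℤ) (a : R) : HahnSeries.single n a ∈ orderGE R n :=
  fun _ hj => HahnSeries.coeff_single_of_ne hj.ne

lemma pi_single_mem_orderGE [AddGroup R] {ι : Type*} [DecidableEq ι] {a : ι → ℤ} {r₀ : ι}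
    {f : LaurentSeries R} (hf : f ∈ orderGE R (a r₀)) (r : ι) :
    (Pi.single r₀ f : ι → LaurentSeries R) r ∈ orderGE R (a r) := by
  rcases eq_or_ne r r₀ with rfl | hr
  · rwa [Pi.single_eq_same]
  · rw [Pi.single_eq_of_ne hr]
    exact zero_mem _

end OrderGE

section Metric

variable {F : Type*} [Field F] [Fintype F]

lemma lsAbs_le_zpow_neg_iff {n : ℤ} {f : LaurentSeries F} :
    lsAbs F f ≤ (Fintype.card F : ℝ) ^ (-n) ↔ f ∈ orderGE F n := by
  have one_lt_card : (1 : ℝ) < Fintype.card F := mod_cast Fintype.one_lt_card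
  rcases eq_or_ne f 0 with rfl | hf
  · simp only [lsAbs, if_true, zero_mem, iff_true]
    positivity
  · rw [lsAbs, if_neg hf, mem_orderGE_iff_le_order hf, zpow_le_zpow_iff_right₀ one_lt_card,
      neg_le_neg_iff]

attribute [local instance] lsMetricSpace

lemma edist_le_inv_card_pow_iff {ι : Type*} [Fintype ι] {x y : ι → LaurentSeries F} {n : ℕ} :
    edist x y ≤ (Fintype.card F : ℝ≥0∞)⁻¹ ^ n ↔ ∀ r, x r - y r ∈ orderGE F n := by
  rw [edist_pi_le_iff]
  refine forall_congr' fun r => ?_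
  have radius_eq : (Fintype.card F : ℝ≥0∞)⁻¹ ^ n =
      ENNReal.ofReal ((Fintype.card F : ℝ) ^ (-(n : ℤ))) := by
    rw [zpow_neg, zpow_natCast, ← inv_pow, ENNReal.ofReal_pow (by positivity),
      ENNReal.ofReal_inv_of_pos (mod_cast Fintype.card_pos), ENNReal.ofReal_natCast]
  rw [radius_eq, edist_dist, ENNReal.ofReal_le_ofReal_iff (by positivity)]
  exact lsAbs_le_zpow_neg_iff

end Metric

section Polynomials

open Polynomial

variable {F : Type*} [Field F] [Fintype F]

lemma polyToLS_monomial (k : ℕ) (a : F) :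
    polyToLS F (monomial k a) = HahnSeries.single (-(k : ℤ)) a := by
  have coe_algebraMap : algebraMap F (LaurentSeries F) a = HahnSeries.single 0 a := by
    rw [HahnSeries.algebraMap_apply']
    simp
  simp [polyToLS, aeval_monomial, coe_algebraMap, HahnSeries.single_pow]

lemma coeff_polyToLS_neg (q : F[X]) (j : ℕ) : (polyToLS F q).coeff (-j) = q.coeff j := by
  induction q using Polynomial.induction_on' with
  | add p q hp hq => rw [map_add, HahnSeries.coeff_add, hp, hq, coeff_add]
  | monomial k a =>
    simp only [polyToLS_monomial, HahnSeries.coeff_single, coeff_monomial, neg_inj, Nat.cast_inj,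
      eq_comm]

lemma coeff_polyToLS_of_pos (q : F[X]) {j : ℤ} (hj : 0 < j) : (polyToLS F q).coeff j = 0 := by
  induction q using Polynomial.induction_on' with
  | add p q hp hq => rw [map_add, HahnSeries.coeff_add, hp, hq, add_zero]
  | monomial k a => rw [polyToLS_monomial, HahnSeries.coeff_single_of_ne (by omega)]

lemma polyToLS_mem_orderGE (q : F[X]) : polyToLS F q ∈ orderGE F (-q.natDegree) := by
  intro j hj
  lift -j to ℕ using by omega with k hk
  rw [← neg_neg j, ← hk, coeff_polyToLS_neg]
  exact coeff_eq_zero_of_natDegree_lt (by omega)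

lemma eq_zero_of_polyToLS_mem_orderGE_one {q : F[X]} (h : polyToLS F q ∈ orderGE F 1) :
    q = 0 := by
  ext j
  rw [← coeff_polyToLS_neg, h _ (by omega), coeff_zero]

lemma polyToLS_ne_zero {q : F[X]} (hq : q ≠ 0) : polyToLS F q ≠ 0 := fun h =>
  hq (eq_zero_of_polyToLS_mem_orderGE_one (h ▸ zero_mem _))

lemma order_polyToLS {q : F[X]} (hq : q ≠ 0) : (polyToLS F q).order = -q.natDegree := by
  refine le_antisymm (HahnSeries.order_le_of_coeff_ne_zero ?_) ?_
  · rwa [coeff_polyToLS_neg, coeff_natDegree, Ne, leadingCoeff_eq_zero]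
  · rw [← mem_orderGE_iff_le_order (polyToLS_ne_zero hq)]
    exact polyToLS_mem_orderGE q

lemma lsAbs_polyToLS {q : F[X]} (hq : q ≠ 0) :
    lsAbs F (polyToLS F q) = (Fintype.card F : ℝ) ^ q.natDegree := by
  rw [lsAbs, if_neg (polyToLS_ne_zero hq), order_polyToLS hq, neg_neg, zpow_natCast]

lemma polyToLS_mul_single_notMem_orderGE {q : F[X]} (hq : q ≠ 0) {m n : ℤ} (hmn : m < n) :
    polyToLS F q * HahnSeries.single m 1 ∉ orderGE F (n - q.natDegree) := by
  intro h
  have single_mem := mem_orderGE_of_mul_mem (polyToLS_ne_zero hq) h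
  rw [order_polyToLS hq, sub_neg_eq_add, sub_add_cancel] at single_mem
  exact one_ne_zero ((HahnSeries.coeff_single_same m (1 : F)).symm.trans (single_mem m hmn))

lemma exists_sub_polyToLS_mem_orderGE_one (f : LaurentSeries F) :
    ∃ P : F[X], f - polyToLS F P ∈ orderGE F 1 := by
  obtain ⟨l, hl⟩ := exists_mem_orderGE_neg f
  refine ⟨∑ j ∈ Finset.range (l + 1), monomial j (f.coeff (-j)), fun j hj => ?_⟩
  lift -j to ℕ using by omega with k hk
  rw [← neg_neg j, ← hk, HahnSeries.coeff_sub, coeff_polyToLS_neg]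
  simp only [finsetSum_coeff, coeff_monomial, Finset.sum_ite_eq', Finset.mem_range]
  split_ifs with hkl
  · exact sub_self _
  · rw [hl _ (by omega), sub_zero]

end Polynomials

section AffineForms

open Polynomial

variable {F : Type*} [Field F] [Fintype F] {ι : Type*}

/-- The box of radii `h ^ (-β r)`, `r ∈ S`, around `x` contains a rational point with a common
denominator of degree less than `d`. The condition is multiplied through by the denominator. -/
def NearRational (S : Set ι) (d : ℕ) (β : ι → ℕ) (x : ι → LaurentSeries F) : Prop :=
  ∃ q : F[X], q ≠ 0 ∧ q.natDegree < d ∧ ∃ p : ι → F[X],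
    ∀ r ∈ S, polyToLS F q * x r - polyToLS F (p r) ∈ orderGE F (β r - q.natDegree)

lemma NearRational.of_sub_mem {S : Set ι} {d : ℕ} {β : ι → ℕ} {x y : ι → LaurentSeries F}
    (hx : NearRational S d β x) (hxy : ∀ r, y r - x r ∈ orderGE F (β r)) :
    NearRational S d β y := by
  obtain ⟨q, hq, hqd, p, hp⟩ := hx
  refine ⟨q, hq, hqd, p, fun r hr => ?_⟩
  have hmul : polyToLS F q * (y r - x r) ∈ orderGE F (-q.natDegree + β r) :=
    mul_mem_orderGE (polyToLS_mem_orderGE q) (hxy r)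
  rw [neg_add_eq_sub] at hmul
  convert add_mem hmul (hp r hr) using 1
  ring

variable [Fintype ι]

/-- The affine form `b₀ + ∑ r, b r * x r` on `F((X⁻¹))^ι` with coefficients in `F[X]`. -/
noncomputable def affineForm (b₀ : F[X]) (b : ι → F[X]) (x : ι → LaurentSeries F) :
    LaurentSeries F :=
  polyToLS F b₀ + ∑ r, polyToLS F (b r) * x r

lemma affineForm_sub (b₀ : F[X]) (b : ι → F[X]) (x y : ι → LaurentSeries F) :
    affineForm b₀ b x - affineForm b₀ b y = ∑ r, polyToLS F (b r) * (x r - y r) := by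
  simp only [affineForm, add_sub_add_left_eq_sub, ← Finset.sum_sub_distrib, mul_sub]

lemma affineForm_add_single [DecidableEq ι] (b₀ : F[X]) (b : ι → F[X]) (x : ι → LaurentSeries F)
    (r₀ : ι) (e : LaurentSeries F) :
    affineForm b₀ b (x + Pi.single r₀ e) = affineForm b₀ b x + polyToLS F (b r₀) * e := by
  simp [affineForm, mul_add, Finset.sum_add_distrib, Pi.single_apply, add_assoc]

lemma polyToLS_mul_affineForm (b₀ q : F[X]) (b p : ι → F[X]) (x : ι → LaurentSeries F) :
    polyToLS F q * affineForm b₀ b x = polyToLS F (b₀ * q + ∑ r, b r * p r) +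
      ∑ r, polyToLS F (b r) * (polyToLS F q * x r - polyToLS F (p r)) := by
  simp only [affineForm, map_add, map_sum, map_mul, mul_add, mul_sub, Finset.mul_sum,
    Finset.sum_sub_distrib]
  simp only [mul_left_comm (polyToLS F q)]
  ring

lemma sum_polyToLS_mul_mem_orderGE {b : ι → F[X]} {z : ι → LaurentSeries F} {n : ℤ}
    (h : ∀ r, b r ≠ 0 → z r ∈ orderGE F (n + (b r).natDegree)) :
    ∑ r, polyToLS F (b r) * z r ∈ orderGE F n := by
  refine sum_mem fun r _ => ?_
  rcases eq_or_ne (b r) 0 with hb | hb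
  · rw [hb, map_zero, zero_mul]
    exact zero_mem _
  · simpa using mul_mem_orderGE (polyToLS_mem_orderGE (b r)) (h r hb)

-- Pigeonhole on the coefficients of `∑ r, b r * x r` at `X⁻¹, …, X⁻⁽ᵈ⁻¹⁾`.
lemma exists_affineForm_mem_orderGE {d : ℕ} {n : ι → ℕ} (hd : 0 < d) (hdn : d ≤ ∑ r, n r)
    (x : ι → LaurentSeries F) :
    ∃ (b₀ : F[X]) (b : ι → F[X]), (∃ r, b r ≠ 0) ∧ (∀ r, b r ≠ 0 → (b r).natDegree < n r) ∧
      affineForm b₀ b x ∈ orderGE F d := by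
  let middleCoeffs (b : ∀ r, degreeLT F (n r)) (j : Fin (d - 1)) : F :=
    (∑ r, polyToLS F (b r) * x r).coeff (j + 1)
  have : ∀ r, Finite (degreeLT F (n r)) := fun r =>
    .of_equiv _ (degreeLTEquiv F (n r)).symm.toEquiv
  have card_lt : Nat.card (Fin (d - 1) → F) < Nat.card (∀ r, degreeLT F (n r)) := by
    have card_degreeLT (r : ι) : Nat.card (degreeLT F (n r)) = Nat.card F ^ n r := by
      simpa using Nat.card_congr (degreeLTEquiv F (n r)).toEquiv
    rw [Nat.card_fun, Nat.card_pi, Finset.prod_congr rfl fun r _ => card_degreeLT r,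
      Finset.prod_pow_eq_pow_sum, Nat.card_fin]
    exact Nat.pow_lt_pow_right Finite.one_lt_card (by omega)
  obtain ⟨b, b', hne, heq⟩ : ∃ b b', b ≠ b' ∧ middleCoeffs b = middleCoeffs b' := by
    by_contra! h
    exact card_lt.not_ge
      (Nat.card_le_card_of_injective middleCoeffs fun b b' => not_imp_not.1 (h b b'))
  have coeff_eq_zero {j : ℤ} (hj : 0 < j) (hjd : j < d) :
      (∑ r, polyToLS F (b r - b' r) * x r).coeff j = 0 := by
    lift j - 1 to ℕ using by omega with k hk
    simp only [map_sub, sub_mul, Finset.sum_sub_distrib, HahnSeries.coeff_sub, sub_eq_zero]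
    simpa only [middleCoeffs, hk, sub_add_cancel] using congrFun heq ⟨k, by omega⟩
  obtain ⟨P, hP⟩ := exists_sub_polyToLS_mem_orderGE_one (∑ r, polyToLS F (b r - b' r) * x r)
  refine ⟨-P, fun r => b r - b' r, ?_, fun r hr => ?_, fun j hj => ?_⟩
  · obtain ⟨r, hr⟩ := Function.ne_iff.1 hne
    exact ⟨r, sub_ne_zero.2 (Subtype.coe_injective.ne hr)⟩
  · exact (natDegree_lt_iff_degree_lt hr).2 (mem_degreeLT.1 (sub_mem (b r).2 (b' r).2))
  · rw [affineForm, map_neg, neg_add_eq_sub]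
    rcases lt_or_ge j 1 with hj1 | hj1
    · exact hP j hj1
    · rw [HahnSeries.coeff_sub, coeff_eq_zero hj1 hj, coeff_polyToLS_of_pos _ hj1, sub_zero]

-- The nearby rational point has so small a denominator that it must lie on the hyperplane.
lemma NearRational.affineForm_mem_orderGE {S : Set ι} {d : ℕ} {β : ι → ℕ} {n : ℤ} {b₀ : F[X]}
    {b : ι → F[X]} {x : ι → LaurentSeries F} (hx : NearRational S d β x)
    (hd : affineForm b₀ b x ∈ orderGE F d) (hS : ∀ r, b r ≠ 0 → r ∈ S)
    (hβ : ∀ r, b r ≠ 0 → d + (b r).natDegree ≤ β r)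
    (hn : ∀ r, b r ≠ 0 → n + (b r).natDegree ≤ β r) :
    affineForm b₀ b x ∈ orderGE F n := by
  obtain ⟨q, hq, hqd, p, hp⟩ := hx
  have remainder_mem {l : ℤ} (hl : ∀ r, b r ≠ 0 → l + (b r).natDegree ≤ β r) :
      ∑ r, polyToLS F (b r) * (polyToLS F q * x r - polyToLS F (p r)) ∈
        orderGE F (l - q.natDegree) :=
    sum_polyToLS_mul_mem_orderGE fun r hr =>
      orderGE_antitone (by linarith [hl r hr]) (hp r (hS r hr))
  have point_on_hyperplane : b₀ * q + ∑ r, b r * p r = 0 := by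
    refine eq_zero_of_polyToLS_mem_orderGE_one ?_
    rw [eq_sub_of_add_eq (polyToLS_mul_affineForm b₀ q b p x).symm]
    refine sub_mem (orderGE_antitone ?_ (mul_mem_orderGE (polyToLS_mem_orderGE q) hd))
      (orderGE_antitone ?_ (remainder_mem (l := d) (mod_cast hβ)))
    all_goals omega
  have hmul := remainder_mem hn
  rw [← zero_add (∑ r, _), ← map_zero (polyToLS F), ← point_on_hyperplane,
    ← polyToLS_mul_affineForm] at hmul
  simpa [order_polyToLS hq] using mem_orderGE_of_mul_mem (polyToLS_ne_zero hq) hmul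

-- Near `c`, all rational points of small height lie on one hyperplane, and moving in the
-- direction `r₀` in which the hyperplane is steepest leaves its neighbourhood.
lemma exists_coord_not_nearRational_add_single [DecidableEq ι] {S : Set ι} {d : ℕ}
    {n α β : ι → ℕ} (hd : 0 < d) (hdn : d ≤ ∑ r, n r) (hS : ∀ r, n r ≠ 0 → r ∈ S)
    (hα : ∀ r, d + n r ≤ α r) (hαβ : ∀ r, α r < β r) (c : ι → LaurentSeries F) :
    ∃ r₀, ∀ x, (∀ r, x r - c r ∈ orderGE F (α r)) → NearRational S d β x →
      ¬ NearRational S d β (x + Pi.single r₀ (HahnSeries.single (α r₀ : ℤ) 1)) := by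
  obtain ⟨b₀, b, ⟨r₁, hr₁⟩, hbn, hc⟩ := exists_affineForm_mem_orderGE hd hdn c
  obtain ⟨r₀, hr₀, hmin⟩ := Set.exists_min_image {r | b r ≠ 0}
    (fun r => (β r : ℤ) - (b r).natDegree) (Set.toFinite _) ⟨r₁, hr₁⟩
  have hbα (r : ι) (hr : b r ≠ 0) : d + (b r).natDegree ≤ α r := by
    have := hbn r hr
    have := hα r
    omega
  have small_of_nearRational {x : ι → LaurentSeries F} (hxc : ∀ r, x r - c r ∈ orderGE F (α r))
      (hx : NearRational S d β x) :
      affineForm b₀ b x ∈ orderGE F (β r₀ - (b r₀).natDegree) := by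
    have hxd : affineForm b₀ b x ∈ orderGE F d := by
      rw [← sub_add_cancel (affineForm b₀ b x) (affineForm b₀ b c), affineForm_sub]
      exact add_mem (sum_polyToLS_mul_mem_orderGE fun r hr =>
        orderGE_antitone (mod_cast hbα r hr) (hxc r)) hc
    refine hx.affineForm_mem_orderGE hxd (fun r hr => hS r ?_) (fun r hr => ?_) fun r hr => ?_
    · exact (Nat.zero_le _).trans_lt (hbn r hr) |>.ne'
    · exact (hbα r hr).trans (hαβ r).le
    · linarith [hmin r hr]
  refine ⟨r₀, fun x hxc hx hx' => ?_⟩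
  set e : LaurentSeries F := HahnSeries.single (α r₀ : ℤ) 1
  have hx'c (r : ι) : (x + Pi.single r₀ e : ι → LaurentSeries F) r - c r ∈ orderGE F (α r) := by
    rw [Pi.add_apply, add_sub_right_comm]
    exact add_mem (hxc r)
      (pi_single_mem_orderGE (a := fun r => (α r : ℤ)) (single_mem_orderGE _ _) r)
  have step_mem := sub_mem (small_of_nearRational hx'c hx') (small_of_nearRational hxc hx)
  rw [affineForm_add_single, add_sub_cancel_left] at step_mem
  exact polyToLS_mul_single_notMem_orderGE hr₀ (mod_cast hαβ r₀) step_mem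

end AffineForms

section HausdorffDimension

open MeasureTheory Measure Filter Topology Metric
open scoped NNReal

variable {X : Type*}

lemma exists_pow_near_of_lt_one {ρ δ : ℝ≥0∞} (hρ : ρ < 1) (hδ₀ : δ ≠ 0) (hδ₁ : δ ≤ 1) :
    ∃ k : ℕ, ρ ^ (k + 1) < δ ∧ δ ≤ ρ ^ k := by
  have hsmall : ∃ k : ℕ, ρ ^ (k + 1) < δ :=
    (((ENNReal.tendsto_pow_atTop_nhds_zero_of_lt_one hρ).comp (tendsto_add_atTop_nat 1)
      ).eventually_lt_const (pos_iff_ne_zero.2 hδ₀)).exists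
  refine ⟨Nat.find hsmall, Nat.find_spec hsmall, ?_⟩
  cases hfind : Nat.find hsmall with
  | zero => simpa using hδ₁
  | succ k => exact not_lt.1 (Nat.find_min hsmall (hfind ▸ k.lt_succ_self))

variable {ρ C : ℝ≥0∞} {d : ℝ≥0}

lemma outerMeasure_le_ediam_rpow [PseudoEMetricSpace X] {μ : OuterMeasure X} (hρ₀ : ρ ≠ 0)
    (hρ₁ : ρ < 1) (hC : C ≠ ⊤) (hd : d ≠ 0)
    (hμ : ∀ x (k : ℕ), μ (closedEBall x (ρ ^ k)) ≤ C * (ρ ^ k) ^ (d : ℝ)) {t : Set X}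
    (ht : ediam t ≤ 1) : μ t ≤ C * (ρ ^ (d : ℝ))⁻¹ * ediam t ^ (d : ℝ) := by
  have hd' : 0 < (d : ℝ) := NNReal.coe_pos.2 (pos_iff_ne_zero.2 hd)
  rcases t.eq_empty_or_nonempty with rfl | ⟨x, hx⟩
  · simp
  have le_of_ediam_le (k : ℕ) (hk : ediam t ≤ ρ ^ k) : μ t ≤ C * (ρ ^ k) ^ (d : ℝ) :=
    (μ.mono fun y hy => (edist_le_ediam_of_mem hy hx).trans hk).trans (hμ x k)
  rcases eq_or_ne (ediam t) 0 with h0 | h0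
  · have htendsto : Tendsto (fun k : ℕ => C * (ρ ^ k) ^ (d : ℝ)) atTop (𝓝 0) := by
      have := (ENNReal.tendsto_pow_atTop_nhds_zero_of_lt_one hρ₁).ennrpow_const (d : ℝ)
      simpa [hd'] using ENNReal.Tendsto.const_mul this (.inr hC)
    exact (ge_of_tendsto' htendsto fun k => le_of_ediam_le k (by simp [h0])).trans zero_le
  · obtain ⟨k, hk, hk'⟩ := exists_pow_near_of_lt_one hρ₁ h0 ht
    calc μ t ≤ C * (ρ ^ k) ^ (d : ℝ) := le_of_ediam_le k hk'
      _ = C * (ρ ^ (d : ℝ))⁻¹ * (ρ ^ (k + 1)) ^ (d : ℝ) := by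
        rw [pow_succ', ENNReal.mul_rpow_of_nonneg _ _ hd'.le, mul_assoc,
          ENNReal.inv_mul_cancel_left]
        · simp [hρ₀, (hρ₁.trans ENNReal.one_lt_top).ne]
        · exact ENNReal.rpow_ne_top_of_nonneg hd'.le (hρ₁.trans ENNReal.one_lt_top).ne
      _ ≤ C * (ρ ^ (d : ℝ))⁻¹ * ediam t ^ (d : ℝ) := by gcongr

-- The mass distribution principle.
lemma le_dimH_of_outerMeasure_closedEBall_le [EMetricSpace X] {μ : OuterMeasure X}
    (hρ₀ : ρ ≠ 0) (hρ₁ : ρ < 1) (hC : C ≠ ⊤)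
    (hμ : ∀ x (k : ℕ), μ (closedEBall x (ρ ^ k)) ≤ C * (ρ ^ k) ^ (d : ℝ)) {s : Set X}
    (hs : μ s ≠ 0) : d ≤ dimH s := by
  borelize X
  rcases eq_or_ne d 0 with rfl | hd
  · exact zero_le
  set K := C * (ρ ^ (d : ℝ))⁻¹ + 1
  have hK : K ≠ ⊤ := by finiteness
  have le_mkMetric : μ ≤ OuterMeasure.mkMetric (K • fun r => r ^ (d : ℝ)) :=
    OuterMeasure.le_mkMetric _ μ 1 one_pos fun t ht =>
      (outerMeasure_le_ediam_rpow hρ₀ hρ₁ hC hd hμ ht).trans (mul_le_mul' le_self_add le_rfl)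
  have le_smul_hausdorff : μ s ≤ K * μH[d] s :=
    (le_mkMetric s).trans <| (OuterMeasure.mkMetric_mono_smul hK (by simp [K]) .rfl s).trans_eq <|
      congr_arg (K * ·) (congr_fun (OuterMeasure.coe_mkMetric _) s)
  exact le_dimH_of_hausdorffMeasure_ne_zero fun h => hs (by simpa [h] using le_smul_hausdorff)

lemma dimH_le_of_finite_codings [EMetricSpace X] {s : Set X} {T : ℕ → Type*}
    [∀ n, Fintype (T n)] (code : ∀ n, X → T n) {r : ℕ → ℝ≥0∞} (hr : Tendsto r atTop (𝓝 0))
    (hcode : ∀ n, ∀ x ∈ s, ∀ y ∈ s, code n x = code n y → edist x y ≤ r n) (hC : C ≠ ⊤)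
    (hcard : ∀ n, Fintype.card (T n) * r n ^ (d : ℝ) ≤ C) : dimH s ≤ d := by
  borelize X
  let piece (n : ℕ) (c : T n) : Set X := {x ∈ s | code n x = c}
  have ediam_piece_le (n : ℕ) (c : T n) : ediam (piece n c) ≤ r n :=
    ediam_le fun x hx y hy => hcode n x hx.1 y hy.1 (hx.2.trans hy.2.symm)
  have sum_le (n : ℕ) : ∑ c, ediam (piece n c) ^ (d : ℝ) ≤ C :=
    calc ∑ c, ediam (piece n c) ^ (d : ℝ) ≤ ∑ _ : T n, r n ^ (d : ℝ) := by
          gcongr with c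
          exact ediam_piece_le n c
      _ ≤ C := by simpa using hcard n
  refine dimH_le_of_hausdorffMeasure_ne_top (ne_top_of_le_ne_top hC ?_)
  refine (hausdorffMeasure_le_liminf_sum d s r hr piece (.of_forall ediam_piece_le)
    (.of_forall fun n x hx => Set.mem_iUnion.2 ⟨code n x, hx, rfl⟩)).trans ?_
  exact liminf_le_of_le (by isBoundedDefault) fun b hb =>
    let ⟨n, hn⟩ := hb.exists
    hn.trans (sum_le n)

end HausdorffDimension

section UpperBound

variable {F : Type*} [Field F] [Fintype F] {ι : Type*} [Fintype ι]

attribute [local instance] lsMetricSpace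

lemma dimH_pi_orderGE_le (n : ℤ) :
    dimH {x : ι → LaurentSeries F | ∀ r, x r ∈ orderGE F n} ≤ Fintype.card ι := by
  set h := (Fintype.card F : ℝ≥0∞)
  have one_lt_h : 1 < h := Nat.one_lt_cast.2 Fintype.one_lt_card
  refine dimH_le_of_finite_codings (d := Fintype.card ι) (T := fun k => ι → Fin (k - n).toNat → F)
    (fun k x r j => (x r).coeff (n + j)) (r := fun k => h⁻¹ ^ k)
    (ENNReal.tendsto_pow_atTop_nhds_zero_of_lt_one (ENNReal.inv_lt_one.2 one_lt_h))
    (fun k x hx y hy hxy => ?_) (C := h ^ ((-n).toNat * Fintype.card ι)) (by simp [h]) fun k => ?_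
  · refine edist_le_inv_card_pow_iff.2 fun r j hj => ?_
    rcases lt_or_ge j n with hjn | hjn
    · exact sub_mem (hx r) (hy r) j hjn
    · obtain ⟨a, rfl⟩ := Int.le.dest hjn
      rw [HahnSeries.coeff_sub, sub_eq_zero]
      exact congr_fun (congr_fun hxy r) ⟨a, by omega⟩
  · have card_codes : Fintype.card (ι → Fin (k - n).toNat → F) =
        Fintype.card F ^ ((k - n).toNat * Fintype.card ι) := by
      simp [pow_mul]
    rw [card_codes, NNReal.coe_natCast, ENNReal.rpow_natCast, ← pow_mul, ← ENNReal.inv_pow,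
      Nat.cast_pow, ← div_eq_mul_inv]
    refine ENNReal.div_le_of_le_mul ?_
    rw [← pow_add, ← add_mul]
    gcongr
    · exact one_lt_h.le
    · omega

lemma dimH_pi_laurentSeries_le (s : Set (ι → LaurentSeries F)) : dimH s ≤ Fintype.card ι := by
  have hcover : s ⊆ ⋃ l : ℕ, {x | ∀ r, x r ∈ orderGE F (-l)} := fun x _ => by
    choose l hl using fun r => exists_mem_orderGE_neg (x r)
    refine Set.mem_iUnion.2 ⟨∑ r, l r, fun r => orderGE_antitone ?_ (hl r)⟩
    exact neg_le_neg (mod_cast Finset.single_le_sum_of_canonicallyOrdered (Finset.mem_univ r))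
  calc dimH s ≤ ⨆ l : ℕ, dimH {x : ι → LaurentSeries F | ∀ r, x r ∈ orderGE F (-l)} :=
        (dimH_mono hcover).trans_eq (dimH_iUnion _)
    _ ≤ Fintype.card ι := iSup_le fun l => dimH_pi_orderGE_le (-l)

end UpperBound

section DigitTrees

open MeasureTheory
open scoped Finset
open Function (updateFinset)

variable {J A : Type*}

lemma outerMeasure_cylinder_le_of_subset [Fintype A] [Nonempty A] {μ : OuterMeasure (J → A)}
    {s t : Finset J} (hts : t ⊆ s) {C : ℝ≥0∞}
    (hμ : ∀ x : J → A, μ {y | ∀ j ∈ s, y j = x j} ≤ C / Fintype.card A ^ #s) (x : J → A) :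
    μ {y | ∀ j ∈ t, y j = x j} ≤ C / Fintype.card A ^ #t := by
  have hcover : {y : J → A | ∀ j ∈ t, y j = x j} ⊆
      ⋃ e : (s \ t : Finset J) → A, {y | ∀ j ∈ s, y j = updateFinset x (s \ t) e j} := by
    refine fun y hy => Set.mem_iUnion.2 ⟨fun j => y j, fun j hj => ?_⟩
    by_cases hjt : j ∈ t
    · simp [updateFinset, hjt, hy j hjt]
    · simp [updateFinset, hjt, hj]
  calc μ {y | ∀ j ∈ t, y j = x j}
      ≤ ∑ e : (s \ t : Finset J) → A, μ {y | ∀ j ∈ s, y j = updateFinset x (s \ t) e j} :=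
        (measure_mono hcover).trans (measure_iUnion_fintype_le _ _)
    _ ≤ ∑ _ : (s \ t : Finset J) → A, C / Fintype.card A ^ #s := Finset.sum_le_sum fun e _ => hμ _
    _ = C / Fintype.card A ^ #t := by
      rw [Finset.sum_const, Finset.card_univ, Fintype.card_fun, Fintype.card_coe, nsmul_eq_mul,
        ← Finset.card_sdiff_add_card_eq_card hts, pow_add, Nat.cast_pow, ← mul_div_assoc,
        ENNReal.mul_div_mul_left]
      · simp
      · simp

variable [DecidableEq J] {s : ℕ → Finset J}

/-- The branch of a digit tree selected by `ω`, started at `x₀`: at stage `k` the digits indexed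
by `s (k + 1) \ s k` are rewritten to the block `step k` assigns to `ω k`. -/
def digitBranch {B : ℕ → Type*} (s : ℕ → Finset J)
    (step : ∀ k, (J → A) → B k → (s (k + 1) \ s k : Finset J) → A) (x₀ : J → A) (ω : ∀ k, B k) :
    ℕ → J → A
  | 0 => x₀
  | k + 1 => updateFinset (digitBranch s step x₀ ω k) (s (k + 1) \ s k)
      (step k (digitBranch s step x₀ ω k) (ω k))

lemma digitBranch_eq_of_le {B : ℕ → Type*} (hs : Monotone s)
    (step : ∀ k, (J → A) → B k → (s (k + 1) \ s k : Finset J) → A) (x₀ : J → A) (ω : ∀ k, B k)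
    {k l : ℕ} (hkl : k ≤ l) {j : J} (hj : j ∈ s k) :
    digitBranch s step x₀ ω l j = digitBranch s step x₀ ω k j := by
  induction l, hkl using Nat.le_induction with
  | base => rfl
  | succ l hkl ih =>
    rw [digitBranch, updateFinset, dif_neg fun h => (Finset.mem_sdiff.1 h).2 (hs hkl hj), ih]

lemma exists_code_of_embeddings [Nonempty A] (hs : Monotone s) {S : ℕ → Set (J → A)}
    (hS : ∀ k, DependsOn (· ∈ S k) (s (k + 1))) {B : ℕ → Type*}
    (step : ∀ k x, B k ↪ {e // updateFinset x (s (k + 1) \ s k) e ∈ S k}) :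
    ∃ code : (∀ k, B k) → J → A, (∀ ω k, code ω ∈ S k) ∧
      ∀ ω ω' k, (∀ j ∈ s k, code ω j = code ω' j) → ∀ i < k, ω i = ω' i := by
  obtain ⟨x₀⟩ : Nonempty (J → A) := inferInstance
  let y : (∀ k, B k) → ℕ → J → A := digitBranch s (fun k x b => (step k x b).1) x₀
  have y_succ (ω : ∀ k, B k) (k : ℕ) :
      y ω (k + 1) = updateFinset (y ω k) _ (step k (y ω k) (ω k)).1 := rfl
  let code (ω : ∀ k, B k) (j : J) : A := y ω (sInf {k | j ∈ s k}) j
  have code_eq (ω : ∀ k, B k) {k : ℕ} {j : J} (hj : j ∈ s k) : code ω j = y ω k j :=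
    (digitBranch_eq_of_le hs _ _ _ (Nat.sInf_le hj)
      (Nat.sInf_mem (s := {k | j ∈ s k}) ⟨k, hj⟩)).symm
  refine ⟨code, fun ω k => ?_, fun ω ω' k h => ?_⟩
  · refine (hS k fun j hj => code_eq ω hj).mpr ?_
    exact (step k (y ω k) (ω k)).2
  suffices y ω k = y ω' k ∧ ∀ i < k, ω i = ω' i from this.2
  induction k with
  | zero => exact ⟨rfl, fun i hi => absurd hi i.not_lt_zero⟩
  | succ k ih =>
    obtain ⟨branch_eq, choices_eq⟩ := ih fun j hj => h j (hs k.le_succ hj)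
    have choice_eq : ω k = ω' k := by
      refine (step k (y ω' k)).injective (Subtype.ext (funext fun ⟨j, hj⟩ => ?_))
      have hjk := (Finset.mem_sdiff.1 hj).1
      have digit_eq := h j hjk
      rw [code_eq _ hjk, code_eq _ hjk, y_succ, y_succ, updateFinset, updateFinset, dif_pos hj,
        dif_pos hj] at digit_eq
      rwa [branch_eq] at digit_eq
    refine ⟨by rw [y_succ, y_succ, branch_eq, choice_eq], fun i hi => ?_⟩
    rcases Nat.lt_succ_iff_lt_or_eq.1 hi with hi | rfl
    exacts [choices_eq i hi, choice_eq]

lemma infinitePi_uniform_cylinder (m : ℕ → ℕ) [∀ k, NeZero (m k)] (ω : ∀ k, Fin (m k)) (n : ℕ) :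
    Measure.infinitePi (fun k => (PMF.uniformOfFintype (Fin (m k))).toMeasure)
      {ω' | ∀ k < n, ω' k = ω k} = (∏ k ∈ Finset.range n, (m k : ℝ≥0∞))⁻¹ := by
  have cylinder_eq : {ω' : ∀ k, Fin (m k) | ∀ k < n, ω' k = ω k} =
      (Finset.range n : Set ℕ).pi fun k => {ω k} := by
    ext
    simp
  rw [cylinder_eq, Measure.infinitePi_pi _ fun _ _ => measurableSet_singleton _,
    ENNReal.prod_inv_distrib fun k _ l _ _ => .inr (ENNReal.natCast_ne_top _)]
  refine Finset.prod_congr rfl fun k _ => ?_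
  simp [PMF.toMeasure_apply_singleton _ _ (measurableSet_singleton _)]

lemma exists_outerMeasure_of_embeddings [Nonempty A] (hs : Monotone s) {S : ℕ → Set (J → A)}
    (hS : ∀ k, DependsOn (· ∈ S k) (s (k + 1))) (m : ℕ → ℕ) [∀ k, NeZero (m k)]
    (step : ∀ k x, Fin (m k) ↪ {e // updateFinset x (s (k + 1) \ s k) e ∈ S k}) :
    ∃ μ : OuterMeasure (J → A), μ (⋂ k, S k) = 1 ∧ ∀ (x : J → A) (k : ℕ),
      μ {y | ∀ j ∈ s k, y j = x j} ≤ (∏ l ∈ Finset.range k, (m l : ℝ≥0∞))⁻¹ := by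
  obtain ⟨code, code_mem, code_inj⟩ := exists_code_of_embeddings hs hS step
  let P : Measure (∀ k, Fin (m k)) :=
    .infinitePi fun k => (PMF.uniformOfFintype (Fin (m k))).toMeasure
  refine ⟨OuterMeasure.map code P.toOuterMeasure, ?_, fun x k => ?_⟩
  · have preimage_eq : code ⁻¹' ⋂ k, S k = Set.univ :=
      Set.eq_univ_of_forall fun ω => Set.mem_iInter.2 (code_mem ω)
    simp [preimage_eq, P]
  rcases (code ⁻¹' {y | ∀ j ∈ s k, y j = x j}).eq_empty_or_nonempty with hempty | ⟨ω, hω⟩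
  · simp [hempty]
  calc P (code ⁻¹' {y | ∀ j ∈ s k, y j = x j}) ≤ P {ω' | ∀ l < k, ω' l = ω l} :=
        measure_mono fun ω' hω' =>
          code_inj ω' ω k fun j hj => (hω' j hj).trans (hω j hj).symm
    _ = (∏ l ∈ Finset.range k, (m l : ℝ≥0∞))⁻¹ := infinitePi_uniform_cylinder m ω k

lemma pow_card_le_pow_mul_prod (hs : Monotone s) (hs₀ : s 0 = ∅) {a : ℕ} (ha : 0 < a) (k : ℕ) :
    a ^ #(s k) ≤ a ^ k * ∏ l ∈ Finset.range k, a ^ (#(s (l + 1) \ s l) - 1) := by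
  induction k with
  | zero => simp [hs₀]
  | succ k ih =>
    calc a ^ #(s (k + 1)) = a ^ #(s (k + 1) \ s k) * a ^ #(s k) := by
          rw [← pow_add, Finset.card_sdiff_add_card_eq_card (hs k.le_succ)]
      _ ≤ (a * a ^ (#(s (k + 1) \ s k) - 1)) *
            (a ^ k * ∏ l ∈ Finset.range k, a ^ (#(s (l + 1) \ s l) - 1)) := by
          gcongr
          rw [← pow_succ']
          exact pow_le_pow_right₀ ha (by omega)
      _ = a ^ (k + 1) * ∏ l ∈ Finset.range (k + 1), a ^ (#(s (l + 1) \ s l) - 1) := by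
          rw [Finset.prod_range_succ]
          ring

lemma exists_outerMeasure_of_card_extensions [Fintype A] [Nonempty A] (hs : Monotone s)
    (hs₀ : s 0 = ∅) {S : ℕ → Set (J → A)} (hS : ∀ k, DependsOn (· ∈ S k) (s (k + 1)))
    (hcard : ∀ k x, Fintype.card A ^ #(s (k + 1) \ s k) ≤
      Fintype.card A * Nat.card {e // updateFinset x (s (k + 1) \ s k) e ∈ S k}) :
    ∃ μ : OuterMeasure (J → A), μ (⋂ k, S k) = 1 ∧ ∀ (x : J → A) (k : ℕ),
      μ {y | ∀ j ∈ s k, y j = x j} ≤ (Fintype.card A : ℝ≥0∞) ^ k / Fintype.card A ^ #(s k) := by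
  set a := Fintype.card A
  have ha : 0 < a := Fintype.card_pos
  let m (k : ℕ) : ℕ := a ^ (#(s (k + 1) \ s k) - 1)
  have : ∀ k, NeZero (m k) := fun k => ⟨(pow_pos ha _).ne'⟩
  have step (k : ℕ) (x : J → A) :
      Nonempty (Fin (m k) ↪ {e // updateFinset x (s (k + 1) \ s k) e ∈ S k}) := by
    refine Function.Embedding.nonempty_of_card_le ?_
    rw [Fintype.card_fin, ← Nat.card_eq_fintype_card]
    have := hcard k x
    rcases hnew : #(s (k + 1) \ s k) with _ | n
    · simp only [m, hnew]
      exact Nat.pos_of_mul_pos_left ((pow_pos ha _).trans_le this)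
    · rw [hnew, pow_succ'] at this
      simpa only [m, hnew, Nat.add_sub_cancel] using Nat.le_of_mul_le_mul_left this ha
  obtain ⟨μ, hμ, hcyl⟩ := exists_outerMeasure_of_embeddings hs hS m fun k x => (step k x).some
  refine ⟨μ, hμ, fun x k => (hcyl x k).trans ?_⟩
  rw [ENNReal.le_div_iff_mul_le (by simp [ha.ne']) (by simp), mul_comm, ← div_eq_mul_inv]
  exact ENNReal.div_le_of_le_mul (mod_cast pow_card_le_pow_mul_prod hs hs₀ ha k)

end DigitTrees

section SeriesOfDigits

open Function (updateFinset)

lemma updateFinset_add_single {J A : Type*} [DecidableEq J] [AddZeroClass A] (x : J → A)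
    (s : Finset J) (e : s → A) (j : s) (a : A) :
    updateFinset x s (e + Pi.single j a) = updateFinset x s e + Pi.single j.1 a := by
  ext l
  by_cases hl : l ∈ s
  · simp [updateFinset, hl, Pi.single_apply, Subtype.ext_iff]
  · have : l ≠ j := fun h => hl (h ▸ j.2)
    simp [updateFinset, hl, this]

lemma card_le_two_mul_card_not {G : Type*} [AddGroup G] [Finite G] {P : G → Prop} (g : G)
    (h : ∀ x, P x → ¬ P (x + g)) : Nat.card G ≤ 2 * Nat.card {x // ¬ P x} := by
  have card_le : Nat.card {x // P x} ≤ Nat.card {x // ¬ P x} :=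
    Nat.card_le_card_of_injective (fun x => ⟨x + g, h x x.2⟩) fun x y hxy =>
      Subtype.ext (add_right_cancel (Subtype.ext_iff.1 hxy))
  rw [← Nat.card_congr (Equiv.sumCompl P), Nat.card_sum]
  omega

variable {R : Type*} [Ring R] {ι : Type*}

/-- The point of `R[[X⁻¹]]^ι` whose `r`-th coordinate has `x ⟨r, j⟩` as coefficient of `X⁻ʲ`. -/
noncomputable def seriesOfDigits (x : (Σ _ : ι, ℕ) → R) (r : ι) : LaurentSeries R :=
  HahnSeries.ofPowerSeries ℤ R (PowerSeries.mk fun j => x ⟨r, j⟩)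

lemma seriesOfDigits_sub_mem_orderGE_iff {x y : (Σ _ : ι, ℕ) → R} {r : ι} {n : ℕ} :
    seriesOfDigits x r - seriesOfDigits y r ∈ orderGE R n ↔ ∀ j < n, x ⟨r, j⟩ = y ⟨r, j⟩ := by
  rw [seriesOfDigits, seriesOfDigits, ← map_sub, mem_orderGE]
  refine ⟨fun h j hj => ?_, fun h j hj => ?_⟩
  · simpa [sub_eq_zero] using h j (mod_cast hj)
  · rcases lt_or_ge j 0 with hj₀ | hj₀
    · simp [PowerSeries.coeff_coe, hj₀]
    · lift j to ℕ using hj₀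
      simpa [sub_eq_zero] using h j (mod_cast hj)

lemma seriesOfDigits_add_single [DecidableEq ι] (x : (Σ _ : ι, ℕ) → R) (r : ι) (j : ℕ) (a : R) :
    seriesOfDigits (x + Pi.single ⟨r, j⟩ a) =
      seriesOfDigits x + Pi.single r (HahnSeries.single (j : ℤ) a) := by
  ext r' l
  rcases lt_or_ge l 0 with hl | hl
  · have : ((Pi.single r (HahnSeries.single (j : ℤ) a) : ι → LaurentSeries R) r').coeff l = 0 := by
      rcases eq_or_ne r' r with rfl | hr
      · simp [HahnSeries.coeff_single_of_ne (show l ≠ j by omega)]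
      · simp [hr]
    simp [seriesOfDigits, PowerSeries.coeff_coe, hl, this]
  · lift l to ℕ using hl
    rcases eq_or_ne r' r with rfl | hr
    · simp [seriesOfDigits, Pi.single_apply, HahnSeries.coeff_single]
    · simp [seriesOfDigits, hr]

variable [Fintype ι]

/-- The positions of the digits of `X⁻ʲ`, `j < a r`, in the `r`-th coordinate. -/
def digitsBelow (a : ι → ℕ) : Finset (Σ _ : ι, ℕ) :=
  Finset.univ.sigma fun r => Finset.range (a r)

lemma mem_digitsBelow {a : ι → ℕ} {r : ι} {j : ℕ} : ⟨r, j⟩ ∈ digitsBelow a ↔ j < a r := by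
  simp [digitsBelow]

lemma card_digitsBelow (a : ι → ℕ) : (digitsBelow a).card = ∑ r, a r := by
  simp [digitsBelow]

lemma digitsBelow_mono : Monotone (digitsBelow (ι := ι)) := fun _ _ hab ⟨r, _⟩ hj =>
  mem_digitsBelow.2 ((mem_digitsBelow.1 hj).trans_le (hab r))

lemma forall_seriesOfDigits_sub_mem_orderGE_iff {x y : (Σ _ : ι, ℕ) → R} {a : ι → ℕ} :
    (∀ r, seriesOfDigits x r - seriesOfDigits y r ∈ orderGE R (a r)) ↔
      ∀ j ∈ digitsBelow a, x j = y j := by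
  simp only [seriesOfDigits_sub_mem_orderGE_iff, Sigma.forall, mem_digitsBelow]

variable {F : Type*} [Field F] [Fintype F]

lemma dependsOn_nearRational_seriesOfDigits (S : Set ι) (d : ℕ) (β : ι → ℕ) :
    DependsOn (fun x : (Σ _ : ι, ℕ) → F => NearRational S d β (seriesOfDigits x))
      (digitsBelow β) := by
  intro x y hxy
  refine propext ⟨fun h => ?_, fun h => ?_⟩
  · exact h.of_sub_mem (forall_seriesOfDigits_sub_mem_orderGE_iff.2 fun j hj => (hxy j hj).symm)
  · exact h.of_sub_mem (forall_seriesOfDigits_sub_mem_orderGE_iff.2 hxy)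

lemma card_pow_le_card_mul_card_not_nearRational {S : Set ι} {d : ℕ} {n α β : ι → ℕ}
    (hdn : d ≤ ∑ r, n r) (hS : ∀ r, n r ≠ 0 → r ∈ S) (hα : ∀ r, d + n r ≤ α r)
    (hαβ : ∀ r, α r < β r) (x : (Σ _ : ι, ℕ) → F) :
    Fintype.card F ^ (digitsBelow β \ digitsBelow α).card ≤
      Fintype.card F * Nat.card {e : (digitsBelow β \ digitsBelow α : Finset _) → F //
        ¬ NearRational S d β (seriesOfDigits (updateFinset x _ e))} := by
  set new := digitsBelow β \ digitsBelow α
  obtain ⟨g, hg⟩ : ∃ g : new → F, ∀ e,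
      NearRational S d β (seriesOfDigits (updateFinset x new e)) →
        ¬ NearRational S d β (seriesOfDigits (updateFinset x new (e + g))) := by
    rcases d.eq_zero_or_pos with rfl | hd
    · exact ⟨0, fun e ⟨_, _, hq, _⟩ => absurd hq (Nat.not_lt_zero _)⟩
    obtain ⟨r₀, hr₀⟩ :=
      exists_coord_not_nearRational_add_single hd hdn hS hα hαβ (seriesOfDigits x)
    have mem_new : (⟨r₀, α r₀⟩ : Σ _ : ι, ℕ) ∈ new := by
      simp [new, mem_digitsBelow, hαβ]
    refine ⟨Pi.single ⟨_, mem_new⟩ 1, fun e he => ?_⟩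
    rw [updateFinset_add_single, seriesOfDigits_add_single]
    refine hr₀ _ (forall_seriesOfDigits_sub_mem_orderGE_iff.2 fun j hj => ?_) he
    simp [updateFinset, new, hj]
  calc Fintype.card F ^ new.card = Nat.card (new → F) := by simp
    _ ≤ 2 * Nat.card {e // ¬ NearRational S d β (seriesOfDigits (updateFinset x new e))} :=
        card_le_two_mul_card_not g hg
    _ ≤ _ := Nat.mul_le_mul_right _ Fintype.one_lt_card

end SeriesOfDigits

section LowerBound

open MeasureTheory
open scoped NNReal

variable {F : Type*} [Field F] [Fintype F] {ι : Type*} [Fintype ι] {S : Set ι} {m : ℕ}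
  {n : ℕ → ι → ℕ}

lemma exists_outerMeasure_not_nearRational (hm : 0 < m) (hn : Monotone n) (hn₀ : n 0 = 0)
    (hmn : ∀ k, m * k ≤ ∑ r, n k r) (hS : ∀ k r, n k r ≠ 0 → r ∈ S) :
    ∃ μ : OuterMeasure ((Σ _ : ι, ℕ) → F),
      μ {x | ∀ k, ¬ NearRational S (m * k) (fun r => m * (k + 1) + n (k + 1) r)
        (seriesOfDigits x)} = 1 ∧
      ∀ (x : (Σ _ : ι, ℕ) → F) (k : ℕ), μ {y | ∀ j ∈ digitsBelow (fun _ => m * k), y j = x j} ≤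
        (Fintype.card F : ℝ≥0∞) ^ k / Fintype.card F ^ (m * k * Fintype.card ι) := by
  let level (k : ℕ) : Finset (Σ _ : ι, ℕ) := digitsBelow fun r => m * k + n k r
  have level_mono : Monotone level := fun k l hkl =>
    digitsBelow_mono fun r => Nat.add_le_add (Nat.mul_le_mul_left m hkl) (hn hkl r)
  have level_zero : level 0 = ∅ := by
    simp [level, hn₀, digitsBelow]
  obtain ⟨μ, hμ, hcyl⟩ := exists_outerMeasure_of_card_extensions (A := F) level_mono level_zero
    (S := fun k => {x | ¬ NearRational S (m * k) (fun r => m * (k + 1) + n (k + 1) r)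
      (seriesOfDigits x)})
    (fun k _ _ hxy => congrArg Not (dependsOn_nearRational_seriesOfDigits _ _ _ hxy))
    fun k x => card_pow_le_card_mul_card_not_nearRational (hmn k) (hS k) (fun r => le_rfl)
      (fun r => add_lt_add_of_lt_of_le (Nat.mul_lt_mul_of_pos_left k.lt_succ_self hm)
        (hn k.le_succ r)) x
  refine ⟨μ, by rwa [← Set.ofPred_forall] at hμ, fun x k => ?_⟩
  have hsub : (digitsBelow fun _ => m * k) ⊆ level k :=
    digitsBelow_mono fun r => Nat.le_add_right _ _
  simpa [card_digitsBelow, mul_comm] using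
    outerMeasure_cylinder_le_of_subset hsub (fun y => hcyl y k) x

attribute [local instance] lsMetricSpace

lemma sub_inv_le_dimH_not_nearRational [Nonempty ι] (hm : 0 < m) (hn : Monotone n)
    (hn₀ : n 0 = 0) (hmn : ∀ k, m * k ≤ ∑ r, n k r) (hS : ∀ k r, n k r ≠ 0 → r ∈ S) :
    (Fintype.card ι : ℝ≥0∞) - (m : ℝ≥0∞)⁻¹ ≤
      dimH {x : ι → LaurentSeries F |
        ∀ k, ¬ NearRational S (m * k) (fun r => m * (k + 1) + n (k + 1) r) x} := by
  obtain ⟨μ, hμ, hcyl⟩ := exists_outerMeasure_not_nearRational (F := F) hm hn hn₀ hmn hS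
  set h := (Fintype.card F : ℝ≥0∞)
  have hh₀ : h ≠ 0 := by simp [h]
  have hh : h ≠ ⊤ := ENNReal.natCast_ne_top _
  have one_lt_h : 1 < h := Nat.one_lt_cast.2 Fintype.one_lt_card
  have inv_le_card : (m : ℝ≥0)⁻¹ ≤ Fintype.card ι :=
    (inv_le_one_of_one_le₀ (mod_cast hm)).trans (mod_cast Fintype.card_pos)
  have radius_rpow (k : ℕ) : h ^ k / h ^ (m * k * Fintype.card ι) =
      ((h⁻¹ ^ m) ^ k) ^ ((Fintype.card ι - (m : ℝ≥0)⁻¹ : ℝ≥0) : ℝ) := by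
    rw [← pow_mul, ← ENNReal.inv_pow, ENNReal.inv_rpow, ← ENNReal.rpow_natCast_mul,
      ← ENNReal.rpow_neg, ← ENNReal.rpow_natCast, ← ENNReal.rpow_natCast,
      ← ENNReal.rpow_sub _ _ hh₀ hh, NNReal.coe_sub inv_le_card]
    congr 1
    push_cast
    field_simp
    ring
  have ball_le (x : ι → LaurentSeries F) (k : ℕ) :
      OuterMeasure.map seriesOfDigits μ (Metric.closedEBall x ((h⁻¹ ^ m) ^ k)) ≤
        1 * ((h⁻¹ ^ m) ^ k) ^ ((Fintype.card ι - (m : ℝ≥0)⁻¹ : ℝ≥0) : ℝ) := by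
    rw [OuterMeasure.map_apply, one_mul, ← radius_rpow, ← pow_mul]
    rcases (seriesOfDigits ⁻¹' Metric.closedEBall x (h⁻¹ ^ (m * k))).eq_empty_or_nonempty
      with hempty | ⟨y₀, hy₀⟩
    · simp [hempty]
    refine (measure_mono fun y hy => ?_).trans (hcyl y₀ k)
    refine forall_seriesOfDigits_sub_mem_orderGE_iff.1 fun r => ?_
    simpa using sub_mem (edist_le_inv_card_pow_iff.1 hy r) (edist_le_inv_card_pow_iff.1 hy₀ r)
  have := le_dimH_of_outerMeasure_closedEBall_le (by simp [hh]) (pow_lt_one₀ zero_le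
    (ENNReal.inv_lt_one.2 one_lt_h) hm.ne') ENNReal.one_ne_top ball_le
    (s := {x | ∀ k, ¬ NearRational S (m * k) (fun r => m * (k + 1) + n (k + 1) r) x})
    (by simp [OuterMeasure.map_apply, hμ])
  simpa [ENNReal.coe_inv, hm.ne'] using this

end LowerBound

section BadlyApproximable

/-- The set of badly approximable points of `F((X⁻¹))^ι` for the weights `i`; the coordinates
with `i r ≤ 0` impose no condition. -/
def badLaurentSeries (F : Type*) [Field F] [Fintype F] {ι : Type*} (i : ι → ℝ) :
    Set (ι → LaurentSeries F) :=
  {x | ∃ c : ℝ, 0 < c ∧ ∀ q : Polynomial F, q ≠ 0 → ∀ p : ι → Polynomial F,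
    ∃ r : ι, 0 < i r ∧
      c / lsAbs F (polyToLS F q) ≤
        lsAbs F (polyToLS F q * x r - polyToLS F (p r)) ^ (1 / i r)}

variable {F : Type*} [Field F] [Fintype F] {ι : Type*}

lemma rpow_neg_le_lsAbs_rpow_of_notMem {f : LaurentSeries F} {n : ℤ} (hf : f ∉ orderGE F n)
    {a z : ℝ} (ha : 0 < a) (hn : n ≤ a * z) :
    (Fintype.card F : ℝ) ^ (-z) ≤ lsAbs F f ^ (1 / a) := by
  have one_lt_card : (1 : ℝ) < Fintype.card F := mod_cast Fintype.one_lt_card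
  rw [← lsAbs_le_zpow_neg_iff, not_le] at hf
  calc (Fintype.card F : ℝ) ^ (-z) ≤ (Fintype.card F : ℝ) ^ ((-n : ℤ) * (1 / a)) := by
        refine Real.rpow_le_rpow_of_exponent_le one_lt_card.le ?_
        rw [mul_one_div, le_div_iff₀ ha]
        push_cast
        linarith
    _ = ((Fintype.card F : ℝ) ^ (-n)) ^ (1 / a) := by
        rw [Real.rpow_mul (by positivity), Real.rpow_intCast]
    _ ≤ lsAbs F f ^ (1 / a) := Real.rpow_le_rpow (by positivity) hf.le (by positivity)

lemma add_ceil_mul_sub_le {a t D M : ℝ} (ha : 0 < a) (ht₀ : 0 ≤ t) (ht : t ≤ D + M) :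
    t + ⌈a * t⌉₊ - D ≤ a * (D + ((M + 1) / a + M)) := by
  have ceil_le : (⌈a * t⌉₊ : ℝ) ≤ a * (D + M) + 1 :=
    (Nat.ceil_lt_add_one (by positivity)).le.trans (by gcongr)
  calc t + ⌈a * t⌉₊ - D ≤ (D + M) + (a * (D + M) + 1) - D := by gcongr
    _ = a * (D + ((M + 1) / a + M)) := by
      field_simp
      ring

lemma mem_badLaurentSeries_of_not_nearRational [Finite ι] {i : ι → ℝ} {m : ℕ} (hm : 0 < m)
    {x : ι → LaurentSeries F}
    (hx : ∀ k : ℕ, ¬ NearRational {r | 0 < i r} (m * k)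
      (fun r => m * (k + 1) + ⌈i r * (m * (k + 1) : ℕ)⌉₊) x) :
    x ∈ badLaurentSeries F i := by
  have card_pos : (0 : ℝ) < Fintype.card F := mod_cast Fintype.card_pos
  obtain ⟨Z, hZ⟩ := Finite.exists_le fun r => (2 * m + 1) / i r + 2 * m
  refine ⟨(Fintype.card F : ℝ) ^ (-Z), by positivity, fun q hq p => ?_⟩
  set D := q.natDegree with hD
  set k := D / m + 1
  have hDk : D < m * k := Nat.lt_mul_div_succ D hm
  have hkD : ((m * (k + 1) : ℕ) : ℝ) ≤ D + 2 * m := by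
    have := Nat.mul_div_le D m
    exact_mod_cast show m * (D / m + 1 + 1) ≤ D + 2 * m by linarith
  obtain ⟨r, hr, hfar⟩ : ∃ r, 0 < i r ∧ polyToLS F q * x r - polyToLS F (p r) ∉
      orderGE F ((m * (k + 1) + ⌈i r * (m * (k + 1) : ℕ)⌉₊ : ℕ) - D) := by
    by_contra! h
    exact hx k ⟨q, hq, hDk, p, h⟩
  refine ⟨r, hr, ?_⟩
  calc (Fintype.card F : ℝ) ^ (-Z) / lsAbs F (polyToLS F q)
      = (Fintype.card F : ℝ) ^ (-(D + Z)) := by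
        rw [lsAbs_polyToLS hq, ← hD, ← Real.rpow_sub_natCast card_pos.ne', neg_add']
        congr 1
        ring
    _ ≤ _ := rpow_neg_le_lsAbs_rpow_of_notMem hfar hr ?_
  calc (((m * (k + 1) + ⌈i r * (m * (k + 1) : ℕ)⌉₊ : ℕ) - D : ℤ) : ℝ)
      = (m * (k + 1) : ℕ) + ⌈i r * (m * (k + 1) : ℕ)⌉₊ - D := by
        push_cast
        rfl
    _ ≤ i r * (D + ((2 * m + 1) / i r + 2 * m)) := add_ceil_mul_sub_le hr (by positivity) hkD
    _ ≤ i r * (D + Z) := by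
        gcongr
        exact hZ r

attribute [local instance] lsMetricSpace

lemma sub_inv_le_dimH_badLaurentSeries [Fintype ι] {i : ι → ℝ} (hsum : 1 ≤ ∑ r, i r) {m : ℕ}
    (hm : 0 < m) :
    (Fintype.card ι : ℝ≥0∞) - (m : ℝ≥0∞)⁻¹ ≤ dimH (badLaurentSeries F i) := by
  have : Nonempty ι :=
    not_isEmpty_iff.1 fun _ => absurd hsum (by simp)
  let n (k : ℕ) (r : ι) : ℕ := ⌈i r * (m * k : ℕ)⌉₊
  have pos_of_ne_zero (k : ℕ) (r : ι) (h : n k r ≠ 0) : 0 < i r :=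
    pos_of_mul_pos_left (Nat.ceil_pos.1 (pos_iff_ne_zero.2 h)) (Nat.cast_nonneg _)
  have n_mono : Monotone n := fun k l hkl r => by
    rcases eq_or_ne (n k r) 0 with h | h
    · exact h ▸ Nat.zero_le _
    · have := pos_of_ne_zero k r h
      simp only [n]
      gcongr
  have le_sum (k : ℕ) : m * k ≤ ∑ r, n k r := by
    suffices ((m * k : ℕ) : ℝ) ≤ (∑ r, n k r : ℕ) from mod_cast this
    calc ((m * k : ℕ) : ℝ) ≤ (∑ r, i r) * (m * k : ℕ) := le_mul_of_one_le_left (by positivity) hsum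
      _ ≤ (∑ r, n k r : ℕ) := by
        rw [Finset.sum_mul, Nat.cast_sum]
        exact Finset.sum_le_sum fun r _ => Nat.le_ceil _
  refine (sub_inv_le_dimH_not_nearRational hm n_mono (by ext; simp [n]) le_sum
    pos_of_ne_zero).trans (dimH_mono fun x hx => ?_)
  exact mem_badLaurentSeries_of_not_nearRational hm hx

end BadlyApproximable

theorem dimH_badLaurentSeries_eq_general (F : Type*) [Field F] [Fintype F] {ι : Type*} [Fintype ι]
    (i : ι → ℝ) (hsum : 1 ≤ ∑ r, i r) :
    letI : MetricSpace (LaurentSeries F) := lsMetricSpace F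
    dimH (badLaurentSeries F i) = Fintype.card ι := by
  refine le_antisymm (dimH_pi_laurentSeries_le _) (le_of_tendsto' (x := Filter.atTop)
    (f := fun m : ℕ => (Fintype.card ι : ℝ≥0∞) - ((m + 1 : ℕ) : ℝ≥0∞)⁻¹) ?_
    fun m => sub_inv_le_dimH_badLaurentSeries hsum m.succ_pos)
  have := ENNReal.Tendsto.sub (tendsto_const_nhds (x := (Fintype.card ι : ℝ≥0∞)))
    (ENNReal.tendsto_inv_nat_nhds_zero.comp (Filter.tendsto_add_atTop_nat 1)) (by simp)
  simpa using this

/-- Let `𝔽` be a finite field with `h` elements.  For any `N`-tuple of weights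
`(i₁, …, i_N)` with `i_r ≥ 0` and `i₁ + ⋯ + i_N = 1`, the set
`Bad_{𝔽((X⁻¹))}(i₁, …, i_N) ⊆ 𝔽((X⁻¹))^N` — the set of `x ∈ 𝔽((X⁻¹))^N` for which there is
`c > 0` such that for all `q, p₁, …, p_N ∈ 𝔽[X]` with `q ≠ 0`,
`max{‖q x_r - p_r‖^(1/i_r) : i_r > 0} ≥ c ‖q‖⁻¹` — has Hausdorff dimension `N`
(with respect to the sup metric on `𝔽((X⁻¹))^N` induced by the absolute value `‖·‖`). -/
theorem dimH_badLaurentSeries_eq (F : Type*) [Field F] [Fintype F]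
    (N : ℕ) (i : Fin N → ℝ) (hi : ∀ r, 0 ≤ i r) (hsum : ∑ r, i r = 1) :
    letI : MetricSpace (LaurentSeries F) := lsMetricSpace F
    dimH {x : Fin N → LaurentSeries F | ∃ c : ℝ, 0 < c ∧
        ∀ q : Polynomial F, q ≠ 0 → ∀ p : Fin N → Polynomial F,
          ∃ r : Fin N, 0 < i r ∧
            c / lsAbs F (polyToLS F q) ≤
              lsAbs F (polyToLS F q * x r - polyToLS F (p r)) ^ (1 / i r)} =
      (N : ℝ≥0∞) := by
  exact (dimH_badLaurentSeries_eq_general F i hsum.ge).trans (by rw [Fintype.card_fin])
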